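/- There exists c₀ > 0 such that for all 2π-periodic smooth f, ∫_{-π}^{π} (∂ₓf)³ dx ≤ c₀ ‖f‖_{H^{1/2}_per} ‖f‖²_{H^{3/2}_per}. -/

import Mathlib

/-!
The cubic estimate (3.6) of the paper: there is c₀ > 0 such that for every
smooth 2π-periodic real function f,
  ∫_{-π}^{π} (∂ₓ f)³ dx ≤ c₀ ‖f‖_{H^{1/2}_per} ‖f‖²_{H^{3/2}_per}.
The periodic Sobolev norms are expressed through Fourier coefficients
f̂(k) = (1/2π) ∫_{-π}^{π} f(x) e^{-ikx} dx.
-/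

open MeasureTheory

/-- Fourier coefficients of a 2π-periodic function. -/
noncomputable def fcoef (f : ℝ → ℝ) (k : ℤ) : ℂ :=
  (1 / (2 * Real.pi)) *
    ∫ x in (-Real.pi)..Real.pi, (f x : ℂ) * Complex.exp (-Complex.I * k * x)

/-- The periodic Sobolev norm of order `s`. -/
noncomputable def hNorm (s : ℝ) (a : ℤ → ℂ) : ℝ :=
  Real.sqrt (2 * Real.pi * ∑' k : ℤ, (1 + (k : ℝ) ^ 2) ^ s * ‖a k‖ ^ 2)

open scoped ENNReal

lemma cs_tsum (x y : ℤ → ℝ≥0∞) :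
    (∑' k, x k * y k) ^ 2 ≤ (∑' k, x k ^ 2) * ∑' k, y k ^ 2 := by
  have h := ENNReal.lintegral_mul_le_Lp_mul_Lq (μ := (Measure.count : Measure ℤ))
    (p := 2) (q := 2) Real.HolderConjugate.two_two
    (f := x) (g := y) (measurable_of_countable _).aemeasurable (measurable_of_countable _).aemeasurable
  simp only [lintegral_count, Pi.mul_apply] at h
  calc _ ≤ _ := pow_le_pow_left' h 2
    _ = _ := by
      rw [mul_pow, ← ENNReal.rpow_natCast, ← ENNReal.rpow_natCast (_ ^ _), ← ENNReal.rpow_mul, ← ENNReal.rpow_mul]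
      norm_num

noncomputable def nn (k : ℤ) : ℝ≥0∞ := (k.natAbs : ℝ≥0∞)
noncomputable def sn (k : ℤ) : ℝ≥0∞ := nn k ^ (1/2 : ℝ)

lemma sn_sq (k : ℤ) : sn k * sn k = nn k := by
  unfold sn
  rw [← ENNReal.rpow_add_of_nonneg _ _ (by norm_num) (by norm_num)]; norm_num

open Classical in
lemma inner_count (m : ℤ) : ∑' k : ℤ, (if nn k ≤ nn m then nn k else 0) ≤ 3 * nn m ^ 2 := by
  have h : ∀ k ∉ Finset.Icc (-(m.natAbs:ℤ)) m.natAbs, (if nn k ≤ nn m then nn k else 0) = 0 := by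
    intro k hk
    rw [if_neg]
    intro h
    apply hk
    unfold nn at h
    have : k.natAbs ≤ m.natAbs := by exact_mod_cast h
    rw [Finset.mem_Icc]; omega
  rw [tsum_eq_sum h]
  calc _ ≤ ∑ k ∈ Finset.Icc (-(m.natAbs:ℤ)) m.natAbs, nn m := by
        apply Finset.sum_le_sum; intro k _; split_ifs with h
        · exact h
        · exact zero_le
    _ = ((2 * m.natAbs + 1 : ℕ) * m.natAbs : ℕ) := by
        rw [Finset.sum_const, Int.card_Icc, nsmul_eq_mul]
        have : ((m.natAbs:ℤ) + 1 - -(m.natAbs:ℤ)).toNat = 2 * m.natAbs + 1 := by omega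
        rw [this]; unfold nn; push_cast; ring
    _ ≤ ((3 * m.natAbs ^ 2 : ℕ) : ℝ≥0∞) := by
        norm_cast
        rcases Nat.eq_zero_or_pos m.natAbs with h | h
        · simp [h]
        · nlinarith
    _ = _ := by unfold nn; push_cast; ring

open Classical in
noncomputable def WW (u : ℤ → ℝ≥0∞) (k l m : ℤ) : ℝ≥0∞ :=
  if nn k ≤ nn l ∧ nn k ≤ nn m then (nn k * u k) * ((nn l * u l) * (nn m * u m)) else 0

open Classical in
noncomputable def TT (u : ℤ → ℝ≥0∞) (k : ℤ) : ℝ≥0∞ :=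
  ∑' l, if nn k ≤ nn l ∧ nn k ≤ nn (-k-l) then (nn l * u l) * (nn (-k-l) * u (-k-l)) else 0

open Classical in
lemma TT_sq (u : ℤ → ℝ≥0∞) (k : ℤ) : TT u k ^ 2 ≤
    4 * (∑' l, nn l ^ 3 * u l ^ 2) * ∑' m, if nn k ≤ nn m then nn m * u m ^ 2 else 0 := by
  have h1 : TT u k ≤ ∑' l, (2 * (nn l * sn l * u l)) *
      (if nn k ≤ nn (-k-l) then sn (-k-l) * u (-k-l) else 0) := by
    apply ENNReal.tsum_le_tsum
    intro l
    split_ifs with h1 h2 h3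
    · have hs : sn (-k-l) ≤ 2 * sn l := by
        have : nn (-k-l) ≤ 4 * nn l := by
          have := h1.1
          unfold nn at *
          norm_cast at *
          omega
        unfold sn
        calc _ ≤ (4 * nn l) ^ (1/2:ℝ) := ENNReal.rpow_le_rpow this (by norm_num)
          _ = _ := by
            rw [ENNReal.mul_rpow_of_nonneg _ _ (by norm_num)]
            congr 1
            rw [show (4:ℝ≥0∞) = 2 ^ (2:ℝ) by norm_num, ← ENNReal.rpow_mul]; norm_num
      calc _ = (nn l * u l) * ((sn (-k-l) * sn (-k-l)) * u (-k-l)) := by rw [sn_sq]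
        _ ≤ (nn l * u l) * (((2 * sn l) * sn (-k-l)) * u (-k-l)) := by gcongr
        _ = _ := by ring
    · exact absurd h1.2 h2
    · exact zero_le
    · exact zero_le
  calc _ ≤ _ := pow_le_pow_left' h1 2
    _ ≤ _ := cs_tsum _ _
    _ = _ := by
      congr 1
      · rw [← ENNReal.tsum_mul_left]
        congr 1; ext l
        rw [← sn_sq]; ring
      · rw [← Equiv.tsum_eq (Equiv.subLeft (-k))]
        congr 1; ext l
        simp only [Equiv.subLeft_apply]
        rw [show -k-(-k-l) = l by ring]
        split_ifs
        · rw [← sn_sq]; ring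
        · simp

open Classical in
lemma W_sum (u : ℤ → ℝ≥0∞) : (∑' k, ∑' l, WW u k l (-k-l)) ^ 2 ≤
    12 * ((∑' l, nn l * u l ^ 2) * (∑' l, nn l ^ 3 * u l ^ 2) ^ 2) := by
  set S := ∑' l, nn l ^ 3 * u l ^ 2 with hS
  clear_value S
  have h1 : (∑' k, ∑' l, WW u k l (-k-l)) = ∑' k, (sn k * u k) * (sn k * TT u k) := by
    congr 1; ext k
    calc _ = (nn k * u k) * TT u k := by
          unfold TT
          rw [← ENNReal.tsum_mul_left]
          congr 1; ext l
          unfold WW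
          split_ifs <;> simp
      _ = _ := by rw [← sn_sq]; ring
  rw [h1]
  have h2 : ∑' k, (sn k * TT u k) ^ 2 ≤ 12 * S ^ 2 := by
    calc _ ≤ ∑' k, nn k * (4 * S * ∑' m, if nn k ≤ nn m then nn m * u m ^ 2 else 0) := by
          apply ENNReal.tsum_le_tsum; intro k
          rw [mul_pow, pow_two (sn k), sn_sq]
          gcongr
          rw [hS]; exact TT_sq u k
      _ = 4 * S * ∑' k, ∑' m, (nn m * u m ^ 2) * (if nn k ≤ nn m then nn k else 0) := by
          rw [← ENNReal.tsum_mul_left]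
          refine tsum_congr fun k => ?_
          rw [mul_left_comm]
          congr 1
          rw [← ENNReal.tsum_mul_left]
          congr 1; ext m
          split_ifs
          · ring
          · simp
      _ = 4 * S * ∑' m, (nn m * u m ^ 2) * ∑' k, (if nn k ≤ nn m then nn k else 0) := by
          rw [ENNReal.tsum_comm]
          simp_rw [ENNReal.tsum_mul_left]
      _ ≤ 4 * S * ∑' m, (nn m * u m ^ 2) * (3 * nn m ^ 2) := by
          gcongr with m
          exact inner_count m
      _ = 4 * S * (3 * S) := by
          congr 1
          rw [hS, ← ENNReal.tsum_mul_left]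
          congr 1; ext m; ring
      _ = _ := by ring
  calc _ ≤ _ := cs_tsum _ _
    _ ≤ (∑' k, (sn k * u k) ^ 2) * (12 * S ^ 2) := by gcongr
    _ = (∑' l, nn l * u l ^ 2) * (12 * S ^ 2) := by
        congr 2; ext l; rw [← sn_sq]; ring
    _ = _ := by ring

lemma disc (u : ℤ → ℝ≥0∞) :
    (∑' k, (nn k * u k) * ∑' l, (nn l * u l) * (nn (-k-l) * u (-k-l))) ^ 2 ≤
    108 * ((∑' l, nn l * u l ^ 2) * (∑' l, nn l ^ 3 * u l ^ 2) ^ 2) := by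
  have h : (∑' k, (nn k * u k) * ∑' l, (nn l * u l) * (nn (-k-l) * u (-k-l)))
      ≤ 3 * (∑' k, ∑' l, WW u k l (-k-l)) := by
    calc _ = ∑' k, ∑' l, (nn k * u k) * ((nn l * u l) * (nn (-k-l) * u (-k-l))) := by
          simp_rw [ENNReal.tsum_mul_left]
      _ ≤ ∑' k, ∑' l, (WW u k l (-k-l) + WW u l k (-k-l) + WW u (-k-l) l k) := by
          gcongr with k l
          generalize -k-l = m
          rcases le_total (nn k) (nn l) with h1 | h1 <;> rcases le_total (nn k) (nn m) with h2 | h2 <;>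
          rcases le_total (nn l) (nn m) with h3 | h3
          · refine le_trans (le_of_eq ?_) (le_trans le_self_add le_self_add)
            rw [WW, if_pos ⟨h1, h2⟩]
          · refine le_trans (le_of_eq ?_) (le_trans le_self_add le_self_add)
            rw [WW, if_pos ⟨h1, h2⟩]
          · refine le_trans (le_of_eq ?_) le_add_self
            rw [WW, if_pos ⟨h2.trans h1, h2⟩]; ring
          · refine le_trans (le_of_eq ?_) le_add_self
            rw [WW, if_pos ⟨h3, h2⟩]; ring
          · refine le_trans (le_of_eq ?_) (le_trans le_add_self le_self_add)
            rw [WW, if_pos ⟨h1, h3⟩]; ring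
          · refine le_trans (le_of_eq ?_) le_add_self
            rw [WW, if_pos ⟨h3, h3.trans h1⟩]; ring
          · refine le_trans (le_of_eq ?_) (le_trans le_add_self le_self_add)
            rw [WW, if_pos ⟨h1, h3⟩]; ring
          · refine le_trans (le_of_eq ?_) le_add_self
            rw [WW, if_pos ⟨h3, h2⟩]; ring
      _ = (∑' k, ∑' l, WW u k l (-k-l)) + (∑' k, ∑' l, WW u l k (-k-l))
          + ∑' k, ∑' l, WW u (-k-l) l k := by
          simp_rw [ENNReal.tsum_add]
      _ = _ := by
          have e1 : (∑' k, ∑' l, WW u l k (-k-l)) = ∑' k, ∑' l, WW u k l (-k-l) := by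
            rw [ENNReal.tsum_comm]
            congr 1; ext k; congr 1; ext l
            rw [show -l-k = -k-l by ring]
          have e2 : (∑' k, ∑' l, WW u (-k-l) l k) = ∑' k, ∑' l, WW u k l (-k-l) := by
            rw [ENNReal.tsum_comm]
            rw [ENNReal.tsum_comm (f := fun k l => WW u k l (-k-l))]
            congr 1; ext l
            rw [← Equiv.tsum_eq (Equiv.subLeft (-l))]
            congr 1; ext k
            simp only [Equiv.subLeft_apply]
            rw [show -(-l-k)-l = k by ring, show -l-k = -k-l by ring]
          rw [e1, e2]; ring
  calc _ ≤ _ := pow_le_pow_left' h 2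
    _ = 9 * (∑' k, ∑' l, WW u k l (-k-l)) ^ 2 := by ring
    _ ≤ 9 * (12 * ((∑' l, nn l * u l ^ 2) * (∑' l, nn l ^ 3 * u l ^ 2) ^ 2)) := by
        gcongr; exact W_sum u
    _ = _ := by ring

lemma exp_norm_one (k : ℤ) (x : ℝ) : ‖Complex.exp (-Complex.I * k * x)‖ = 1 := by
  rw [show -Complex.I * k * x = ((-(k:ℝ) * x : ℝ) : ℂ) * Complex.I by push_cast; ring]
  exact Complex.norm_exp_ofReal_mul_I _

lemma per_deriv {f : ℝ → ℝ} (hp : ∀ x, f (x + 2 * Real.pi) = f x) :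
    ∀ x, deriv f (x + 2 * Real.pi) = deriv f x := by
  intro x
  rw [← deriv_comp_add_const]
  congr 1; ext y; exact hp y

lemma fcoef_deriv {f : ℝ → ℝ} (hf : ContDiff ℝ (⊤ : ℕ∞) f)
    (hp : ∀ x, f (x + 2 * Real.pi) = f x) (k : ℤ) :
    fcoef (deriv f) k = Complex.I * k * fcoef f k := by
  have hd : ContDiff ℝ (⊤ : ℕ∞) (deriv f) := ((contDiff_infty_iff_deriv (𝕜 := ℝ)).1 hf).2
  have hv : ∀ x : ℝ, HasDerivAt (fun x : ℝ => (f x : ℂ)) ((deriv f x : ℝ) : ℂ) x := fun x =>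
    ((hf.differentiable (by simp)) x).hasDerivAt.ofReal_comp
  have hu : ∀ x : ℝ, HasDerivAt (fun x : ℝ => Complex.exp (-Complex.I * k * x))
      (Complex.exp (-Complex.I * k * x) * (-Complex.I * k)) x := by
    intro x
    have h1 : HasDerivAt (fun x : ℝ => -Complex.I * k * (x:ℂ)) (-Complex.I * k * 1) x :=
      (Complex.ofRealCLM.hasDerivAt (x := x)).const_mul _
    simpa using h1.cexp
  have hc : Continuous fun x : ℝ => Complex.exp (-Complex.I * k * x) := by fun_prop
  have hdc : Continuous (deriv f) := hd.continuous
  have hib := intervalIntegral.integral_mul_deriv_eq_deriv_mul (a := -Real.pi) (b := Real.pi)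
    (fun x _ => hu x) (fun x _ => hv x)
    (Continuous.intervalIntegrable (by fun_prop) _ _) (Continuous.intervalIntegrable (by fun_prop) _ _)
  have hfp : f Real.pi = f (-Real.pi) := by
    rw [← hp (-Real.pi)]; congr 1; ring
  have hep : Complex.exp (-Complex.I * k * (Real.pi:ℝ)) = Complex.exp (-Complex.I * k * ((-Real.pi : ℝ):ℂ)) := by
    rw [Complex.exp_eq_exp_iff_exists_int]
    refine ⟨-k, ?_⟩; push_cast; ring
  rw [hfp, hep, sub_self, zero_sub] at hib
  unfold fcoef
  simp_rw [mul_comm ((deriv f _ : ℝ):ℂ)]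
  rw [hib, mul_left_comm, ← intervalIntegral.integral_neg, ← intervalIntegral.integral_const_mul (Complex.I * k)]
  congr 2; ext x; ring

lemma fcoef_bdd (f : ℝ → ℝ) : ∃ C, ∀ k, ‖fcoef f k‖ ≤ C := by
  refine ⟨‖(1 / (2 * Real.pi) : ℂ)‖ * ∫ x in (-Real.pi)..Real.pi, |f x|, fun k => ?_⟩
  unfold fcoef
  rw [norm_mul]
  gcongr
  refine (intervalIntegral.norm_integral_le_integral_norm (by linarith [Real.pi_pos])).trans (le_of_eq ?_)
  congr 1; ext x
  rw [norm_mul, exp_norm_one]; simp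

lemma fcoef_decay (j : ℕ) : ∀ f : ℝ → ℝ, ContDiff ℝ (⊤ : ℕ∞) f →
    (∀ x, f (x + 2 * Real.pi) = f x) → ∃ C, ∀ k : ℤ, |(k:ℝ)| ^ j * ‖fcoef f k‖ ≤ C := by
  induction j with
  | zero => intro f _ _; simpa using fcoef_bdd f
  | succ j ih =>
    intro f hf hp
    obtain ⟨C, hC⟩ := ih (deriv f) ((contDiff_infty_iff_deriv (𝕜 := ℝ)).1 hf).2 (per_deriv hp)
    refine ⟨C, fun k => le_trans (le_of_eq ?_) (hC k)⟩
    rw [fcoef_deriv hf hp]; simp; ring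

lemma fcoef_decay4 {f : ℝ → ℝ} (hf : ContDiff ℝ (⊤ : ℕ∞) f)
    (hp : ∀ x, f (x + 2 * Real.pi) = f x) :
    ∃ C, ∀ k : ℤ, (1 + (k:ℝ)^2) ^ 2 * ‖fcoef f k‖ ≤ C := by
  obtain ⟨C0, h0⟩ := fcoef_decay 0 f hf hp
  obtain ⟨C2, h2⟩ := fcoef_decay 2 f hf hp
  obtain ⟨C4, h4⟩ := fcoef_decay 4 f hf hp
  refine ⟨C0 + 2 * C2 + C4, fun k => ?_⟩
  have a0 := h0 k
  have a2 := h2 k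
  have a4 := h4 k
  rw [sq_abs] at a2
  rw [show |(k:ℝ)|^4 = (|(k:ℝ)|^2)^2 by ring, sq_abs] at a4
  nlinarith

lemma summ_base : Summable fun k : ℤ => (1 + (k:ℝ)^2)⁻¹ := by
  have h : Summable fun k : ℤ => 1 / |(k:ℝ)| ^ (2:ℝ) := Real.summable_one_div_int_add_rpow 0 2 |>.2 (by norm_num) |>.congr (by simp)
  refine Summable.of_norm_bounded_eventually h ?_
  have : ∀ᶠ k : ℤ in Filter.cofinite, k ≠ 0 := by
    exact (Set.finite_singleton (0:ℤ)).compl_mem_cofinite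
  filter_upwards [this] with k hk
  have hk' : (0:ℝ) < (k:ℝ)^2 := by positivity
  rw [Real.norm_of_nonneg (by positivity), Real.rpow_two, sq_abs, one_div]
  gcongr; linarith

lemma summ_H {f : ℝ → ℝ} (hf : ContDiff ℝ (⊤ : ℕ∞) f)
    (hp : ∀ x, f (x + 2 * Real.pi) = f x) (s : ℝ) (hs : s ≤ 3) :
    Summable fun k : ℤ => (1 + (k : ℝ) ^ 2) ^ s * ‖fcoef f k‖ ^ 2 := by
  obtain ⟨C, hC⟩ := fcoef_decay4 hf hp
  refine Summable.of_nonneg_of_le (fun k => by positivity) (fun k => ?_) (summ_base.mul_left (C^2))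
  have h1 : (1:ℝ) ≤ 1 + (k:ℝ)^2 := by nlinarith [sq_nonneg (k:ℝ)]
  set A := 1 + (k:ℝ)^2 with hA
  have hA0 : 0 < A := by linarith
  calc _ ≤ A ^ (3:ℝ) * ‖fcoef f k‖ ^ 2 := by gcongr
    _ = (A^2 * ‖fcoef f k‖)^2 * A⁻¹ := by
      rw [show (3:ℝ) = ((3:ℕ):ℝ) by norm_num, Real.rpow_natCast]; field_simp
    _ ≤ _ := by gcongr; exact hC k

lemma summ_coef {f : ℝ → ℝ} (hf : ContDiff ℝ (⊤ : ℕ∞) f)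
    (hp : ∀ x, f (x + 2 * Real.pi) = f x) :
    Summable fun k : ℤ => ‖fcoef f k‖ := by
  obtain ⟨C, hC⟩ := fcoef_decay4 hf hp
  refine Summable.of_nonneg_of_le (fun k => by positivity) (fun k => ?_) (summ_base.mul_left C)
  have h1 : (1:ℝ) ≤ 1 + (k:ℝ)^2 := by nlinarith [sq_nonneg (k:ℝ)]
  have := hC k
  rw [← div_eq_mul_inv, le_div_iff₀ (by positivity)]
  refine le_trans ?_ this
  nlinarith [norm_nonneg (fcoef f k), mul_nonneg (sub_nonneg.2 h1) (norm_nonneg (fcoef f k))]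

lemma fourier_sum {f : ℝ → ℝ} (hf : ContDiff ℝ (⊤ : ℕ∞) f)
    (hp : ∀ x, f (x + 2 * Real.pi) = f x) (x : ℝ) :
    HasSum (fun k : ℤ => fcoef f k * Complex.exp (Complex.I * k * x)) (f x : ℂ) := by
  have : Fact (0 < 2 * Real.pi) := ⟨by positivity⟩
  have hper : Function.Periodic (fun x : ℝ => (f x : ℂ)) (2 * Real.pi) := fun x => by
    simp only [hp x]
  have hcont : Continuous hper.lift := by
    refine continuous_quot_lift _ ?_
    have := hf.continuous
    fun_prop
  let F : C(AddCircle (2 * Real.pi), ℂ) := ⟨hper.lift, hcont⟩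
  have hF : ∀ y : ℝ, F (y : AddCircle (2 * Real.pi)) = f y := fun y => rfl
  have hpi : (Real.pi : ℂ) ≠ 0 := by exact_mod_cast Real.pi_ne_zero
  have hcoef : ∀ k, fourierCoeff F k = fcoef f k := by
    intro k
    rw [fourierCoeff_eq_intervalIntegral F k (-Real.pi)]
    unfold fcoef
    rw [show -Real.pi + 2 * Real.pi = Real.pi by ring, Complex.real_smul]
    congr 1
    · push_cast; ring
    · congr 1; ext y
      rw [hF, fourier_coe_apply, smul_eq_mul, mul_comm]
      congr 2
      push_cast
      field_simp
  have hs : Summable (fourierCoeff F) := by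
    apply Summable.of_norm
    simp_rw [hcoef]
    exact summ_coef hf hp
  have := has_pointwise_sum_fourier_series_of_summable hs (x : AddCircle (2 * Real.pi))
  rw [hF] at this
  convert this using 2 with k
  rw [hcoef, fourier_coe_apply, smul_eq_mul]
  congr 2
  push_cast
  field_simp

lemma exp_norm_one' (k : ℤ) (x : ℝ) : ‖Complex.exp (Complex.I * k * x)‖ = 1 := by
  rw [show Complex.I * k * x = (((k:ℝ) * x : ℝ) : ℂ) * Complex.I by push_cast; ring]
  exact Complex.norm_exp_ofReal_mul_I _

lemma int_step {g : ℝ → ℝ} (hg : ContDiff ℝ (⊤ : ℕ∞) g)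
    (hp : ∀ x, g (x + 2 * Real.pi) = g x) (φ : ℝ → ℂ) (hφ : Continuous φ) :
    ‖∫ x in (-Real.pi)..Real.pi, (g x : ℂ) * φ x‖ₑ ≤
      ∑' k, ‖fcoef g k‖ₑ * ‖∫ x in (-Real.pi)..Real.pi, Complex.exp (Complex.I * k * x) * φ x‖ₑ := by
  have h : HasSum (fun k : ℤ => ∫ x in (-Real.pi)..Real.pi,
      fcoef g k * Complex.exp (Complex.I * k * x) * φ x)
      (∫ x in (-Real.pi)..Real.pi, (g x : ℂ) * φ x) := by
    apply intervalIntegral.hasSum_integral_of_dominated_convergence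
      (fun k x => ‖fcoef g k‖ * ‖φ x‖)
    · intro k
      exact Continuous.aestronglyMeasurable (by fun_prop)
    · intro k
      refine Filter.Eventually.of_forall fun x _ => ?_
      rw [norm_mul, norm_mul, exp_norm_one', mul_one]
    · exact Filter.Eventually.of_forall fun x _ => (summ_coef hg hp).mul_right _
    · simp_rw [tsum_mul_right]
      exact Continuous.intervalIntegrable (by fun_prop) _ _
    · exact Filter.Eventually.of_forall fun x _ => (fourier_sum hg hp x).mul_right _
  rw [← h.tsum_eq]
  refine (enorm_tsum_le_tsum_enorm).trans (le_of_eq ?_)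
  refine tsum_congr fun k => ?_
  simp_rw [mul_assoc (fcoef g k)]
  rw [intervalIntegral.integral_const_mul, enorm_mul]

lemma int_cube {g : ℝ → ℝ} (hg : ContDiff ℝ (⊤ : ℕ∞) g)
    (hp : ∀ x, g (x + 2 * Real.pi) = g x) :
    ‖∫ x in (-Real.pi)..Real.pi, (g x) ^ 3‖ₑ ≤ ENNReal.ofReal (2 * Real.pi) *
      ∑' k, ‖fcoef g k‖ₑ * ∑' l, ‖fcoef g l‖ₑ * ‖fcoef g (-k-l)‖ₑ := by
  have hc := hg.continuous
  have h0 : ‖∫ x in (-Real.pi)..Real.pi, (g x) ^ 3‖ₑ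
      = ‖∫ x in (-Real.pi)..Real.pi, (g x : ℂ) * ((g x : ℂ) * (g x : ℂ))‖ₑ := by
    have : (∫ x in (-Real.pi)..Real.pi, (g x : ℂ) * ((g x : ℂ) * (g x : ℂ)))
        = ((∫ x in (-Real.pi)..Real.pi, (g x) ^ 3 : ℝ) : ℂ) := by
      rw [← intervalIntegral.integral_ofReal]
      congr 1; ext x; push_cast; ring
    rw [this, ← ofReal_norm, ← ofReal_norm, Complex.norm_real]
  rw [h0]
  refine (int_step hg hp _ (by fun_prop)).trans ?_
  rw [← ENNReal.tsum_mul_left]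
  refine ENNReal.tsum_le_tsum fun k => ?_
  rw [mul_left_comm]
  gcongr
  have h1 : (∫ x in (-Real.pi)..Real.pi, Complex.exp (Complex.I * k * x) * ((g x : ℂ) * (g x : ℂ)))
    = ∫ x in (-Real.pi)..Real.pi, (g x : ℂ) * (Complex.exp (Complex.I * k * x) * (g x : ℂ)) := by
    congr 1; ext x; ring
  rw [h1]
  refine (int_step hg hp _ (by fun_prop)).trans ?_
  rw [← ENNReal.tsum_mul_left]
  refine ENNReal.tsum_le_tsum fun l => ?_
  rw [mul_left_comm]
  gcongr
  have h2 : (∫ x in (-Real.pi)..Real.pi, Complex.exp (Complex.I * l * x) *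
      (Complex.exp (Complex.I * k * x) * (g x : ℂ))) = ((2 * Real.pi : ℝ) : ℂ) * fcoef g (-k-l) := by
    unfold fcoef
    have hpi : (Real.pi : ℂ) ≠ 0 := by exact_mod_cast Real.pi_ne_zero
    rw [← mul_assoc]
    have : ((2 * Real.pi : ℝ) : ℂ) * (1 / (2 * Real.pi)) = 1 := by push_cast; field_simp
    rw [this, one_mul]
    congr 1; ext x
    rw [← mul_assoc, ← Complex.exp_add, mul_comm]
    congr 2; push_cast; ring
  rw [h2, enorm_mul, ← ofReal_norm, Complex.norm_real, Real.norm_of_nonneg (by positivity)]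

lemma S_le {f : ℝ → ℝ} (hf : ContDiff ℝ (⊤ : ℕ∞) f)
    (hp : ∀ x, f (x + 2 * Real.pi) = f x) (j : ℕ) (s : ℝ) (hj : s = (j:ℝ) / 2) (hs : s ≤ 3) :
    ∑' l, nn l ^ j * ‖fcoef f l‖ₑ ^ 2 ≤
      ENNReal.ofReal (∑' k : ℤ, (1 + (k : ℝ) ^ 2) ^ s * ‖fcoef f k‖ ^ 2) := by
  rw [ENNReal.ofReal_tsum_of_nonneg (fun k => by positivity) (summ_H hf hp s hs)]
  refine ENNReal.tsum_le_tsum fun k => ?_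
  have h1 : nn k = ENNReal.ofReal |(k:ℝ)| := by
    unfold nn
    rw [← Int.cast_abs, Int.abs_eq_natAbs, Int.cast_natCast, ENNReal.ofReal_natCast]
  rw [h1, ← ofReal_norm, ← ENNReal.ofReal_pow (by positivity), ← ENNReal.ofReal_pow (by positivity),
    ← ENNReal.ofReal_mul (by positivity)]
  apply ENNReal.ofReal_le_ofReal
  gcongr
  calc |(k:ℝ)| ^ j = ((k:ℝ)^2) ^ s := by
        rw [← sq_abs, ← Real.rpow_natCast, ← Real.rpow_natCast, ← Real.rpow_mul (abs_nonneg _), hj]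
        congr 1; push_cast; ring
    _ ≤ _ := by
        apply Real.rpow_le_rpow (by positivity) (by linarith)
        rw [hj]; positivity

/-- **Estimate (3.6):** `∫ (∂ₓf)³ ≤ c₀ ‖f‖_{H^{1/2}} ‖f‖²_{H^{3/2}}`. -/
theorem cubic_derivative_estimate :
    ∃ c₀ > (0:ℝ), ∀ f : ℝ → ℝ, ContDiff ℝ (⊤ : ℕ∞) f → (∀ x, f (x + 2 * Real.pi) = f x) →
      (∫ x in (-Real.pi)..Real.pi, (deriv f x) ^ 3)
        ≤ c₀ * hNorm (1/2) (fcoef f) * (hNorm (3/2) (fcoef f)) ^ 2 := by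
  refine ⟨11, by norm_num, fun f hf hp => ?_⟩
  have hd : ContDiff ℝ (⊤ : ℕ∞) (deriv f) := ((contDiff_infty_iff_deriv (𝕜 := ℝ)).1 hf).2
  have h1 := int_cube hd (per_deriv hp)
  have hc : ∀ k, ‖fcoef (deriv f) k‖ₑ = nn k * ‖fcoef f k‖ₑ := by
    intro k
    rw [fcoef_deriv hf hp, enorm_mul]
    congr 1
    unfold nn
    rw [← ofReal_norm, norm_mul, Complex.norm_I, one_mul, Complex.norm_intCast,
      ← Int.cast_abs, Int.abs_eq_natAbs, Int.cast_natCast, ENNReal.ofReal_natCast]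
  simp_rw [hc] at h1
  have h2 := disc (fun k => ‖fcoef f k‖ₑ)
  have hA := S_le hf hp 1 (1/2) (by norm_num) (by norm_num)
  have hB := S_le hf hp 3 (3/2) (by norm_num) (by norm_num)
  simp only [pow_one] at hA
  have hA0 : 0 ≤ ∑' k : ℤ, (1 + (k : ℝ) ^ 2) ^ (1/2:ℝ) * ‖fcoef f k‖ ^ 2 :=
    tsum_nonneg fun k => by positivity
  have hB0 : 0 ≤ ∑' k : ℤ, (1 + (k : ℝ) ^ 2) ^ (3/2:ℝ) * ‖fcoef f k‖ ^ 2 :=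
    tsum_nonneg fun k => by positivity
  unfold hNorm
  set A := ∑' k : ℤ, (1 + (k : ℝ) ^ 2) ^ (1/2:ℝ) * ‖fcoef f k‖ ^ 2
  set B := ∑' k : ℤ, (1 + (k : ℝ) ^ 2) ^ (3/2:ℝ) * ‖fcoef f k‖ ^ 2
  set I := ∫ x in (-Real.pi)..Real.pi, (deriv f x) ^ 3
  have hpi := Real.pi_gt_three
  have h3 : ENNReal.ofReal (|I| ^ 2) ≤ ENNReal.ofReal ((2 * Real.pi) ^ 2 * (108 * (A * B ^ 2))) := by
    rw [ENNReal.ofReal_pow (abs_nonneg _), ← Real.norm_eq_abs, ofReal_norm]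
    calc _ ≤ _ := pow_le_pow_left' h1 2
      _ ≤ ENNReal.ofReal (2 * Real.pi) ^ 2 *
          (108 * (ENNReal.ofReal A * ENNReal.ofReal B ^ 2)) := by
        rw [mul_pow]
        gcongr
        refine h2.trans ?_
        gcongr
      _ = _ := by
        rw [ENNReal.ofReal_mul (p := (2 * Real.pi) ^ 2) (by positivity),
          ENNReal.ofReal_mul (p := 108) (by positivity),
          ENNReal.ofReal_mul hA0, ENNReal.ofReal_pow (by positivity), ENNReal.ofReal_pow hB0]
        norm_num
  rw [ENNReal.ofReal_le_ofReal_iff (by positivity)] at h3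
  refine (le_abs_self I).trans (abs_le_of_sq_le_sq' ?_ (by positivity)).2
  rw [Real.sq_sqrt (by positivity), mul_pow, mul_pow, Real.sq_sqrt (by positivity)]
  refine h3.trans ?_
  have hX : 0 ≤ (2 * Real.pi) ^ 2 * (A * B ^ 2) := by positivity
  nlinarith
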